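/- arXiv:2305.12613 — 4 statements merged into one kernel-verified Lean document; each statement's English description precedes it below -/
import Mathlib

section
/- Spectral monotonicity for subcomplexes: Let G be a finite abstract simplicial complex with n elements and K ⊆ G a subcomplex with m elements. Then for every k with 1 ≤ k ≤ m, the k-th smallest eigenvalue of L_K is at most the (k + n − m)-th smallest eigenvalue of L_G; equivalently, after left-padding the ascending eigenvalue list of L_K with n − m zeros, λ_k(L_K) ≤ λ_k(L_G) for all 1 ≤ k ≤ n. -/
open Matrix

/-- A finite abstract simplicial complex: a finite nonempty collection of nonempty
finite subsets of ℕ closed under taking nonempty subsets. -/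
def IsComplex (G : Finset (Finset ℕ)) : Prop :=
  G.Nonempty ∧ ∅ ∉ G ∧ ∀ x ∈ G, ∀ y : Finset ℕ, y ⊆ x → y.Nonempty → y ∈ G

/-- A subcomplex: a set of sets closed under taking nonempty subsets. -/
def IsSubcomplex (K : Finset (Finset ℕ)) : Prop :=
  ∀ x ∈ K, ∀ y : Finset ℕ, y ⊆ x → y.Nonempty → y ∈ K

/-- The incidence sign s(x,y) = (-1)^i when y is obtained from x by deleting the
(i+1)-th smallest element of x. -/
noncomputable def incSign (x y : Finset ℕ) : ℝ :=
  (-1 : ℝ) ^ (x.filter (fun v => ∃ w ∈ x \ y, v < w)).card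

/-- The exterior derivative matrix of a subset A of a simplicial complex. -/
noncomputable def extDer (A : Finset (Finset ℕ)) : Matrix A A ℝ :=
  Matrix.of fun x y =>
    if (y : Finset ℕ) ⊆ (x : Finset ℕ) ∧ (x : Finset ℕ).card = (y : Finset ℕ).card + 1
    then incSign (x : Finset ℕ) (y : Finset ℕ) else 0

/-- The Dirac matrix D = d + dᵀ. -/
noncomputable def dirac (A : Finset (Finset ℕ)) : Matrix A A ℝ :=
  extDer A + (extDer A)ᵀ

/-- The Hodge Laplacian L = D². -/
noncomputable def hodge (A : Finset (Finset ℕ)) : Matrix A A ℝ :=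
  dirac A * dirac A

/-- The block of the Hodge Laplacian acting on p-forms: the submatrix of L on
the p-simplices (sets of cardinality p+1). -/
noncomputable def hodgeBlock (A : Finset (Finset ℕ)) (p : ℕ) :
    Matrix (A.filter fun x => x.card = p + 1) (A.filter fun x => x.card = p + 1) ℝ :=
  (hodge A).submatrix
    (fun x => ⟨x.1, (Finset.mem_filter.mp x.2).1⟩)
    (fun x => ⟨x.1, (Finset.mem_filter.mp x.2).1⟩)

/-- The p-th Betti number: the dimension of the kernel of the p-form block of the
Hodge Laplacian. -/
noncomputable def betti (A : Finset (Finset ℕ)) (p : ℕ) : ℕ :=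
  Module.finrank ℝ (LinearMap.ker (Matrix.toLin' (hodgeBlock A p)))

open scoped Classical in
/-- The ascending list of eigenvalues (with multiplicity) of a real symmetric matrix. -/
noncomputable def sortedEigs {α : Type} [Fintype α] [DecidableEq α] (M : Matrix α α ℝ) :
    List ℝ :=
  if hM : M.IsHermitian then Multiset.sort (Finset.univ.val.map hM.eigenvalues) (· ≤ ·)
  else []

/-- The k-th entry (0-indexed) of the list `l` after left-padding it with zeros to length n. -/
noncomputable def padGet (l : List ℝ) (n k : ℕ) : ℝ :=
  if k < n - l.length then 0 else l.getD (k - (n - l.length)) 0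

lemma spec_expand {α : Type} [Fintype α] [DecidableEq α] {M : Matrix α α ℝ}
    (hM : M.IsHermitian) :
    ∃ b : Fin (Fintype.card α) → α → ℝ,
      (∀ x : α → ℝ, x ⬝ᵥ x = ∑ j, (b j ⬝ᵥ x) ^ 2) ∧
      (∀ x : α → ℝ, x ⬝ᵥ (M *ᵥ x) = ∑ j, hM.eigenvalues₀ j * (b j ⬝ᵥ x) ^ 2) := by
  let e : Fin (Fintype.card α) ≃ α := Fintype.equivOfCardEq (Fintype.card_fin _)
  have key : ∀ x y : α → ℝ, x ⬝ᵥ y =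
      ∑ j, ((hM.eigenvectorBasis (e j)).ofLp ⬝ᵥ x) * ((hM.eigenvectorBasis (e j)).ofLp ⬝ᵥ y) := by
    intro x y
    have h := hM.eigenvectorBasis.sum_inner_mul_inner (WithLp.toLp 2 x) (WithLp.toLp 2 y)
    rw [← e.sum_comp] at h
    simp only [EuclideanSpace.inner_eq_star_dotProduct, star_trivial] at h
    rw [dotProduct_comm x y, ← h]
    refine Finset.sum_congr rfl fun j _ => ?_
    rw [dotProduct_comm y]
  refine ⟨fun j => (hM.eigenvectorBasis (e j)).ofLp, fun x => ?_, fun x => ?_⟩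
  · rw [key x x]
    exact Finset.sum_congr rfl fun j _ => by ring
  · rw [key x (M *ᵥ x)]
    refine Finset.sum_congr rfl fun j _ => ?_
    have hT : Mᵀ = M := by simpa [IsHermitian, conjTranspose_eq_transpose_of_trivial] using hM
    have h1 : (hM.eigenvectorBasis (e j)).ofLp ⬝ᵥ (M *ᵥ x)
        = hM.eigenvalues₀ j * ((hM.eigenvectorBasis (e j)).ofLp ⬝ᵥ x) := by
      rw [dotProduct_mulVec, ← mulVec_transpose, hT, hM.mulVec_eigenvectorBasis, smul_dotProduct]
      simp [IsHermitian.eigenvalues, e]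
    rw [h1]; ring

lemma sum_extend {α β : Type} [Fintype α] [Fintype β] (e : α → β) (he : Function.Injective e)
    (u : α → ℝ) (f : β → ℝ) :
    f ⬝ᵥ Function.extend e u 0 = (fun a => f (e a)) ⬝ᵥ u := by
  symm
  refine Fintype.sum_of_injective e he _ _ ?_ ?_
  · intro b hb
    rw [Function.extend_apply' _ _ _ (by simpa using hb)]; simp
  · intro a; simp [he.extend_apply]

lemma eig_le {α β : Type} [Fintype α] [DecidableEq α] [Fintype β] [DecidableEq β]
    {A : Matrix α α ℝ} {B : Matrix β β ℝ} (hA : A.IsHermitian) (hB : B.IsHermitian)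
    (e : α → β) (he : Function.Injective e)
    (hq : ∀ u : α → ℝ, u ⬝ᵥ (A *ᵥ u) ≤
      Function.extend e u 0 ⬝ᵥ (B *ᵥ Function.extend e u 0))
    (i : ℕ) (hi : i < Fintype.card α) (hi' : i < Fintype.card β) :
    hA.eigenvalues₀ ⟨i, hi⟩ ≤ hB.eigenvalues₀ ⟨i, hi'⟩ := by
  obtain ⟨a, ha1, ha2⟩ := spec_expand hA
  obtain ⟨b, hb1, hb2⟩ := spec_expand hB
  have hc : Fintype.card α ≤ Fintype.card β := Fintype.card_le_of_injective e he
  let T : (α → ℝ) →ₗ[ℝ] ({j : Fin (Fintype.card α) // j ≠ ⟨i, hi⟩} → ℝ) :=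
    LinearMap.pi fun j => if i < j.1.1 then dotProductBilin ℝ ℝ (a j.1)
      else dotProductBilin ℝ ℝ (fun x => b ⟨j.1.1, lt_of_lt_of_le j.1.2 hc⟩ (e x))
  have hker : LinearMap.ker T ≠ ⊥ := by
    apply LinearMap.ker_ne_bot_of_finrank_lt
    simp
    omega
  obtain ⟨x, hx, hx0⟩ := (Submodule.ne_bot_iff _).1 hker
  have hT : ∀ j, T x j = 0 := fun j => congrFun hx j
  have h1 : ∀ j : Fin (Fintype.card α), i < j.1 → a j ⬝ᵥ x = 0 := by
    intro j hj
    have := hT ⟨j, by intro h; subst h; simp at hj⟩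
    simpa [T, hj] using this
  have h2 : ∀ j : Fin (Fintype.card β), j.1 < i → b j ⬝ᵥ Function.extend e x 0 = 0 := by
    intro j hj
    have := hT ⟨⟨j.1, hj.trans hi⟩, by intro h; simp at h; omega⟩
    rw [sum_extend e he]
    simpa [T, hj.not_gt] using this
  have hn : Function.extend e x 0 ⬝ᵥ Function.extend e x 0 = x ⬝ᵥ x := by
    rw [sum_extend e he]
    simp [he.extend_apply]
  have hpos : 0 < x ⬝ᵥ x := by
    refine lt_of_le_of_ne (Finset.sum_nonneg fun _ _ => mul_self_nonneg _) fun h => hx0 ?_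
    exact dotProduct_self_eq_zero.1 h.symm
  have e1 : hA.eigenvalues₀ ⟨i, hi⟩ * (x ⬝ᵥ x) ≤ x ⬝ᵥ (A *ᵥ x) := by
    rw [ha1, ha2, Finset.mul_sum]
    refine Finset.sum_le_sum fun j _ => ?_
    by_cases hj : i < j.1
    · simp [h1 j hj]
    · exact mul_le_mul_of_nonneg_right (hA.eigenvalues₀_antitone (by
        rw [Fin.le_def]; simpa using hj)) (sq_nonneg _)
  have e2 : Function.extend e x 0 ⬝ᵥ (B *ᵥ Function.extend e x 0) ≤
      hB.eigenvalues₀ ⟨i, hi'⟩ * (x ⬝ᵥ x) := by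
    rw [← hn, hb1, hb2, Finset.mul_sum]
    refine Finset.sum_le_sum fun j _ => ?_
    by_cases hj : j.1 < i
    · simp [h2 j hj]
    · exact mul_le_mul_of_nonneg_right (hB.eigenvalues₀_antitone (by
        rw [Fin.le_def]; simpa using hj)) (sq_nonneg _)
  exact le_of_mul_le_mul_right (e1.trans ((hq x).trans e2)) hpos

lemma sortedEigs_eq {α : Type} [Fintype α] [DecidableEq α] {M : Matrix α α ℝ}
    (hM : M.IsHermitian) :
    sortedEigs M = List.ofFn fun j => hM.eigenvalues₀ (Fin.rev j) := by
  rw [sortedEigs, dif_pos hM]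
  refine List.Perm.eq_of_pairwise' (r := (· ≤ ·)) (Multiset.pairwise_sort _ _) ?_ ?_
  · rw [List.pairwise_ofFn]
    intro i j hij
    exact hM.eigenvalues₀_antitone (Fin.rev_le_rev.2 hij.le)
  · rw [← Multiset.coe_eq_coe, Multiset.sort_eq]
    let e : Fin (Fintype.card α) ≃ α := Fintype.equivOfCardEq (Fintype.card_fin _)
    have h1 : (Finset.univ : Finset α).val.map hM.eigenvalues =
        (Finset.univ : Finset (Fin (Fintype.card α))).val.map
          (fun j => hM.eigenvalues₀ (Fin.rev j)) := by
      have h2 : (Finset.univ : Finset α) =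
          (Finset.univ : Finset (Fin (Fintype.card α))).map
            (Fin.revPerm.trans e).toEmbedding := by
        exact (Finset.map_univ_equiv (Fin.revPerm.trans e)).symm
      rw [h2, Finset.map_val, Multiset.map_map]
      refine Multiset.map_congr rfl fun j _ => ?_
      simp [IsHermitian.eigenvalues, e]
    rw [h1, Fin.univ_val_map]

lemma sortedEigs_getD {α : Type} [Fintype α] [DecidableEq α] {M : Matrix α α ℝ}
    (hM : M.IsHermitian) (k : ℕ) (hk : k < Fintype.card α) :
    (sortedEigs M).getD k 0 = hM.eigenvalues₀ ⟨Fintype.card α - 1 - k, by omega⟩ := by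
  rw [sortedEigs_eq hM, List.getD_eq_getElem _ _ (by simpa using hk), List.getElem_ofFn]
  congr 1
  ext
  simp [Fin.rev]
  omega

lemma dirac_symm (A : Finset (Finset ℕ)) : (dirac A)ᵀ = dirac A := by
  simp [dirac, add_comm]

lemma hodge_form (A : Finset (Finset ℕ)) (x : A → ℝ) :
    x ⬝ᵥ (hodge A *ᵥ x) = (dirac A *ᵥ x) ⬝ᵥ (dirac A *ᵥ x) := by
  rw [hodge, ← mulVec_mulVec, dotProduct_mulVec, ← mulVec_transpose, dirac_symm]

lemma hodge_posSemidef (A : Finset (Finset ℕ)) : (hodge A).PosSemidef := by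
  have h := posSemidef_conjTranspose_mul_self (dirac A)
  rwa [conjTranspose_eq_transpose_of_trivial, dirac_symm] at h

lemma hodge_form_le (G K : Finset (Finset ℕ)) (hKG : K ⊆ G) (u : K → ℝ) :
    u ⬝ᵥ (hodge K *ᵥ u) ≤
      Function.extend (Set.inclusion hKG : K → G) u 0 ⬝ᵥ
        (hodge G *ᵥ Function.extend (Set.inclusion hKG : K → G) u 0) := by
  have he : Function.Injective (Set.inclusion hKG : K → G) := Set.inclusion_injective hKG
  rw [hodge_form, hodge_form]
  set e : K → G := Set.inclusion hKG with hedef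
  have h : ∀ a : K, (dirac K *ᵥ u) a = (dirac G *ᵥ Function.extend e u 0) (e a) := by
    intro a
    rw [mulVec, mulVec, sum_extend e he]
    rfl
  have h2 : (dirac K *ᵥ u) ⬝ᵥ (dirac K *ᵥ u) =
      ∑ a : K, (dirac G *ᵥ Function.extend e u 0) (e a) ^ 2 := by
    refine Finset.sum_congr rfl fun a _ => ?_
    rw [h a]; ring
  rw [h2, ← Finset.sum_image (f := fun g => (dirac G *ᵥ Function.extend e u 0) g ^ 2)
    (s := Finset.univ) (g := e) (fun _ _ _ _ h => he h)]
  refine (Finset.sum_le_sum_of_subset_of_nonneg (Finset.subset_univ _)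
    (fun _ _ _ => sq_nonneg _)).trans (le_of_eq ?_)
  exact Finset.sum_congr rfl fun a _ => by ring

/-- **Spectral monotonicity for subcomplexes.** If K ⊆ G is a subcomplex with m elements
of a complex G with n elements, then λ_k(L_K) ≤ λ_{k+n-m}(L_G) for 1 ≤ k ≤ m;
equivalently, after left-padding the ascending spectrum of L_K with n-m zeros,
λ_k(L_K) ≤ λ_k(L_G) for all 1 ≤ k ≤ n. -/
theorem spectral_monotonicity_subcomplex (G K : Finset (Finset ℕ)) (hG : IsComplex G)
    (hKG : K ⊆ G) (hK : IsSubcomplex K) :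
    (∀ k : ℕ, 1 ≤ k → k ≤ K.card →
      (sortedEigs (hodge K)).getD (k - 1) 0 ≤
        (sortedEigs (hodge G)).getD (k + G.card - K.card - 1) 0) ∧
    (∀ k : ℕ, 1 ≤ k → k ≤ G.card →
      padGet (sortedEigs (hodge K)) G.card (k - 1) ≤
        (sortedEigs (hodge G)).getD (k - 1) 0) := by
  have hKh := (hodge_posSemidef K).1
  have hGh := (hodge_posSemidef G).1
  have hcard : K.card ≤ G.card := Finset.card_le_card hKG
  have first : ∀ k : ℕ, 1 ≤ k → k ≤ K.card →
      (sortedEigs (hodge K)).getD (k - 1) 0 ≤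
        (sortedEigs (hodge G)).getD (k + G.card - K.card - 1) 0 := by
    intro k hk1 hk2
    rw [sortedEigs_getD hKh _ (by rw [Fintype.card_coe]; omega),
      sortedEigs_getD hGh _ (by rw [Fintype.card_coe]; omega)]
    have h := eig_le hKh hGh (Set.inclusion hKG : K → G) (Set.inclusion_injective hKG)
      (hodge_form_le G K hKG) (K.card - k) (by rw [Fintype.card_coe]; omega)
      (by rw [Fintype.card_coe]; omega)
    convert h using 3 <;> rw [Fintype.card_coe] <;> omega
  refine ⟨first, fun k hk1 hk2 => ?_⟩
  have hlen : (sortedEigs (hodge K)).length = K.card := by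
    rw [sortedEigs_eq hKh, List.length_ofFn, Fintype.card_coe]
  rw [padGet, hlen]
  split_ifs with hk
  · rw [sortedEigs_getD hGh _ (by rw [Fintype.card_coe]; omega)]
    have h := (hodge_posSemidef G).eigenvalues_nonneg
      (Fintype.equivOfCardEq (Fintype.card_fin _)
        ⟨Fintype.card G - 1 - (k - 1), by rw [Fintype.card_coe]; omega⟩)
    simpa [IsHermitian.eigenvalues] using h
  · have h := first (k - (G.card - K.card)) (by omega) (by omega)
    convert h using 2 <;> omega
end

section
/- For finite nonnegative sequences x, y, u, v: if x ≤ y and u ≤ v in the left-padded entrywise order, then x ⊕ u ≤ y ⊕ v. -/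
/-- The left-padded entrywise order on finite ascending sequences. -/
def seqLE (x y : List ℝ) : Prop :=
  ∀ k < max x.length y.length,
    padGet x (max x.length y.length) k ≤ padGet y (max x.length y.length) k

/-- The entrywise sum of the left-padded versions of two ascending sequences. -/
noncomputable def seqAdd (x y : List ℝ) : List ℝ :=
  (List.range (max x.length y.length)).map
    (fun k => padGet x (max x.length y.length) k + padGet y (max x.length y.length) k)

/-- x ⊕ y : the ascending sequence formed by the multiset union of x and y. -/
noncomputable def seqMerge (x y : List ℝ) : List ℝ :=
  Multiset.sort (↑(x ++ y)) (· ≤ ·)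

theorem aux_get (t : ℝ) (l : List ℝ) (hl : l.Pairwise (· ≤ ·)) (i : ℕ) (hi : i < l.length) :
    t ≤ l.getD i 0 ↔ l.length - i ≤ l.countP (fun a => decide (t ≤ a)) := by
  induction l generalizing i with
  | nil => simp at hi
  | cons a l ih =>
    rw [List.pairwise_cons] at hl
    by_cases hta : t ≤ a
    · have hall : ∀ b ∈ a :: l, t ≤ b := by
        intro b hb
        rcases List.mem_cons.1 hb with rfl | hb
        · exact hta
        · exact hta.trans (hl.1 b hb)
      have hc : (a :: l).countP (fun a => decide (t ≤ a)) = (a :: l).length := by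
        rw [List.countP_eq_length]
        intro b hb
        simpa using hall b hb
      rw [hc]
      have : t ≤ (a :: l).getD i 0 := by
        rw [List.getD_eq_getElem _ _ hi]
        exact hall _ (List.getElem_mem hi)
      simp only [this, true_iff]
      omega
    · have hc : (a :: l).countP (fun a => decide (t ≤ a)) = l.countP (fun a => decide (t ≤ a)) := by
        rw [List.countP_cons_of_neg]
        simpa using hta
      rw [hc]
      have hle : l.countP (fun a => decide (t ≤ a)) ≤ l.length := List.countP_le_length
      cases i with
      | zero =>
        simp only [List.getD_cons_zero, hta, false_iff, List.length_cons]
        omega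
      | succ i =>
        have hi' : i < l.length := by simpa using hi
        rw [List.getD_cons_succ, ih hl.2 i hi']
        simp

theorem aux_pad (t : ℝ) (ht : 0 < t) (l : List ℝ) (hl : l.Pairwise (· ≤ ·)) (n k : ℕ)
    (hn : l.length ≤ n) (hk : k < n) :
    t ≤ padGet l n k ↔ n - k ≤ l.countP (fun a => decide (t ≤ a)) := by
  have hle : l.countP (fun a => decide (t ≤ a)) ≤ l.length := List.countP_le_length
  unfold padGet
  split_ifs with h
  · constructor
    · intro h'; linarith
    · intro h'; omega
  · rw [aux_get t l hl _ (by omega)]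
    have : l.length - (k - (n - l.length)) = n - k := by omega
    rw [this]

theorem aux_pad_nonneg (l : List ℝ) (hl : ∀ a ∈ l, 0 ≤ a) (n k : ℕ) : 0 ≤ padGet l n k := by
  unfold padGet
  split_ifs with h
  · exact le_rfl
  · by_cases hi : k - (n - l.length) < l.length
    · rw [List.getD_eq_getElem _ _ hi]
      exact hl _ (List.getElem_mem hi)
    · rw [List.getD_eq_default _ _ (by omega)]

theorem aux_iff (x y : List ℝ) (hx : x.Pairwise (· ≤ ·)) (hy : y.Pairwise (· ≤ ·))
    (hy0 : ∀ a ∈ y, 0 ≤ a) :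
    seqLE x y ↔ ∀ t : ℝ, 0 < t →
      x.countP (fun a => decide (t ≤ a)) ≤ y.countP (fun a => decide (t ≤ a)) := by
  unfold seqLE
  have h1 : x.length ≤ max x.length y.length := le_max_left _ _
  have h2 : y.length ≤ max x.length y.length := le_max_right _ _
  generalize max x.length y.length = n at h1 h2 ⊢
  constructor
  · intro h t ht
    have hle : x.countP (fun a => decide (t ≤ a)) ≤ x.length := List.countP_le_length
    rcases Nat.eq_zero_or_pos (x.countP (fun a => decide (t ≤ a))) with h0 | h0
    · omega
    · have hk : n - x.countP (fun a => decide (t ≤ a)) < n := by omega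
      have := (aux_pad t ht y hy n _ h2 hk).1
        (((aux_pad t ht x hx n _ h1 hk).2 (by omega)).trans (h _ hk))
      omega
  · intro h k hk
    rcases le_or_gt (padGet x n k) 0 with h0 | h0
    · exact h0.trans (aux_pad_nonneg y hy0 n k)
    · exact (aux_pad _ h0 y hy n k h2 hk).2
        (((aux_pad _ h0 x hx n k h1 hk).1 le_rfl).trans (h _ h0))

theorem aux_perm (x y : List ℝ) : (seqMerge x y).Perm (x ++ y) := by
  unfold seqMerge
  exact Multiset.coe_eq_coe.1 (Multiset.sort_eq _ _)

theorem aux_sorted (x y : List ℝ) : (seqMerge x y).Pairwise (· ≤ ·) := by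
  unfold seqMerge
  exact Multiset.pairwise_sort _ _

/-- If x ≤ y and u ≤ v in the left-padded entrywise order on finite nonnegative
ascending sequences, then x ⊕ u ≤ y ⊕ v. -/
theorem seqMerge_mono (x y u v : List ℝ)
    (hx : x.Pairwise (· ≤ ·)) (hy : y.Pairwise (· ≤ ·))
    (hu : u.Pairwise (· ≤ ·)) (hv : v.Pairwise (· ≤ ·))
    (hx0 : ∀ a ∈ x, 0 ≤ a) (hy0 : ∀ a ∈ y, 0 ≤ a)
    (hu0 : ∀ a ∈ u, 0 ≤ a) (hv0 : ∀ a ∈ v, 0 ≤ a)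
    (hxy : seqLE x y) (huv : seqLE u v) :
    seqLE (seqMerge x u) (seqMerge y v) := by
  rw [aux_iff _ _ hx hy hy0] at hxy
  rw [aux_iff _ _ hu hv hv0] at huv
  rw [aux_iff _ _ (aux_sorted _ _) (aux_sorted _ _)]
  · intro t ht
    rw [(aux_perm x u).countP_eq, (aux_perm y v).countP_eq, List.countP_append, List.countP_append]
    exact Nat.add_le_add (hxy t ht) (huv t ht)
  · intro a ha
    rcases List.mem_append.1 ((aux_perm y v).mem_iff.1 ha) with h | h
    · exact hy0 a h
    · exact hv0 a h
end

section
/- For finite nonnegative sequences x and y, one has x + y ≤ 2(x ⊕ y) in the left-padded entrywise order; that is, for every k, the k-th entry of the left-padded sum x + y is at most twice the k-th smallest element of the multiset union of x and y. -/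
theorem sublist_get_le {l z : List ℝ} (h : l.Sublist z) (hz : z.Pairwise (· ≤ ·)) :
    ∀ i, i < l.length → l.getD i 0 ≤ z.getD (i + (z.length - l.length)) 0 := by
  induction h with
  | slnil => intro i hi; simp at hi
  | @cons l₁ l₂ a h ih =>
    intro i hi
    have hl := h.length_le
    have := ih (List.pairwise_cons.1 hz).2 i hi
    have e : i + ((a :: l₂).length - l₁.length) = (i + (l₂.length - l₁.length)) + 1 := by
      simp only [List.length_cons]; omega
    rw [e, List.getD_cons_succ]; exact this
  | @cons_cons l₁ l₂ a h ih =>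
    intro i hi
    have hl := h.length_le
    obtain ⟨h1, h2⟩ := List.pairwise_cons.1 hz
    have e : (a :: l₂).length - (a :: l₁).length = l₂.length - l₁.length := by
      simp only [List.length_cons]; omega
    rw [e]
    cases i with
    | zero =>
      rw [List.getD_cons_zero, Nat.zero_add]
      rcases hd : l₂.length - l₁.length with _ | d
      · simp
      · rw [List.getD_cons_succ, List.getD_eq_getElem _ _ (by omega)]
        exact h1 _ (List.getElem_mem _)
    | succ i =>
      have := ih h2 i (by simpa using hi)
      rw [List.getD_cons_succ, Nat.add_right_comm, List.getD_cons_succ]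
      exact this

theorem getD_nonneg_aux {z : List ℝ} (h0 : ∀ a ∈ z, 0 ≤ a) (i : ℕ) : 0 ≤ z.getD i 0 := by
  by_cases h : i < z.length
  · rw [List.getD_eq_getElem _ _ h]; exact h0 _ (List.getElem_mem _)
  · rw [List.getD_eq_default _ _ (by omega)]

theorem padGet_le_aux {l z : List ℝ} (h : l.Sublist z) (hz : z.Pairwise (· ≤ ·))
    (h0 : ∀ a ∈ z, 0 ≤ a) (m j : ℕ) (h1 : l.length ≤ m) (h2 : m ≤ z.length) (hj : j < m) :
    padGet l m j ≤ z.getD (j + (z.length - m)) 0 := by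
  unfold padGet
  split_ifs with hc
  · exact getD_nonneg_aux h0 _
  · have := sublist_get_le h hz (j - (m - l.length)) (by omega)
    have e : j - (m - l.length) + (z.length - l.length) = j + (z.length - m) := by omega
    rwa [e] at this

/-- For finite nonnegative ascending sequences x and y, one has x + y ≤ 2(x ⊕ y)
in the left-padded entrywise order. -/
theorem seqAdd_le_two_seqMerge (x y : List ℝ)
    (hx : x.Pairwise (· ≤ ·)) (hy : y.Pairwise (· ≤ ·))
    (hx0 : ∀ a ∈ x, 0 ≤ a) (hy0 : ∀ a ∈ y, 0 ≤ a) :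
    seqLE (seqAdd x y) ((seqMerge x y).map (fun a => 2 * a)) := by
  have hperm : (seqMerge x y).Perm (x ++ y) := by
    rw [← Multiset.coe_eq_coe]; exact Multiset.sort_eq _ _
  have hz : (seqMerge x y).Pairwise (· ≤ ·) := Multiset.pairwise_sort _ _
  generalize seqMerge x y = z at hperm hz ⊢
  have h0 : ∀ a ∈ z, 0 ≤ a := by
    intro a ha
    rcases List.mem_append.1 (hperm.mem_iff.1 ha) with h | h
    · exact hx0 a h
    · exact hy0 a h
  have hlen : z.length = x.length + y.length := by simpa using hperm.length_eq
  have sx : x.Sublist z := List.sublist_of_subperm_of_pairwise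
    ((List.sublist_append_left x y).subperm.trans hperm.symm.subperm) hx hz
  have sy : y.Sublist z := List.sublist_of_subperm_of_pairwise
    ((List.sublist_append_right x y).subperm.trans hperm.symm.subperm) hy hz
  have hla : (seqAdd x y).length = max x.length y.length := by simp [seqAdd]
  have hm : max x.length y.length ≤ z.length := by omega
  intro k hk
  have hN : max (seqAdd x y).length (z.map (fun a => 2 * a)).length = z.length := by
    rw [hla, List.length_map]; omega
  rw [hN] at hk ⊢
  have hr : padGet (z.map (fun a => 2 * a)) z.length k = 2 * z.getD k 0 := by
    simp [padGet, hk]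
  rw [hr]
  unfold padGet
  rw [hla]
  split_ifs with hc
  · have := getD_nonneg_aux h0 k
    linarith
  · have hj : k - (z.length - max x.length y.length) < max x.length y.length := by omega
    have a := padGet_le_aux sx hz h0 _ _ (le_max_left _ _) hm hj
    have b := padGet_le_aux sy hz h0 _ _ (le_max_right _ _) hm hj
    have e : k - (z.length - max x.length y.length) + (z.length - max x.length y.length) = k := by
      omega
    rw [e] at a b
    rw [List.getD_eq_getElem _ _ (by rw [hla]; exact hj)]
    simp only [seqAdd, List.getElem_map, List.getElem_range]
    linarith
end

section
/- McKean–Singer symmetry: Let G be a finite abstract simplicial complex, K ⊆ G a subcomplex and U = G \ K (the case K = ∅, U = G is allowed). Then for every real t, the supertrace Σ_{x ∈ U} (−1)^{|x|−1} (exp(−t L_U))_{xx} is independent of t and equals the Euler characteristic Σ_{p≥0} (−1)^p f_p(U). -/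
open Matrix

/-- The number of p-simplices in a set of sets A. -/
def fvec (A : Finset (Finset ℕ)) (p : ℕ) : ℕ :=
  (A.filter fun x => x.card = p + 1).card

open Matrix

theorem mckean_trace_pow {n : Type*} [Fintype n] [DecidableEq n] (P D : Matrix n n ℝ)
    (h : P * D = -(D * P)) (k : ℕ) : (P * (D * D) ^ (k + 1)).trace = 0 := by
  have e : (D * D) ^ (k + 1) = D * (D * D) ^ k * D := by
    have hc : Commute D ((D * D) ^ k) := ((Commute.refl D).mul_right (Commute.refl D)).pow_right k
    rw [pow_succ, hc.eq, Matrix.mul_assoc]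
  have h1 : (P * (D * D) ^ (k + 1)).trace = -(P * (D * D) ^ (k + 1)).trace := by
    calc (P * (D * D) ^ (k + 1)).trace = (P * D * ((D * D) ^ k * D)).trace := by
          rw [e]; simp only [Matrix.mul_assoc]
      _ = -(D * (P * ((D * D) ^ k * D))).trace := by
          rw [h, Matrix.neg_mul, Matrix.trace_neg, Matrix.mul_assoc]
      _ = -(P * (D * D) ^ (k + 1)).trace := by
          rw [Matrix.trace_mul_comm]
          have : (D * D) ^ (k + 1) = (D * D) ^ k * D * D := by
            rw [pow_succ, Matrix.mul_assoc]
          rw [this]; simp only [Matrix.mul_assoc]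
  linarith

open scoped Matrix.Norms.Operator in
theorem mckean_hasSum {n : Type*} [Fintype n] [DecidableEq n] (A : Matrix n n ℝ) :
    HasSum (fun k : ℕ => ((k.factorial : ℝ)⁻¹) • A ^ k) (NormedSpace.exp A) :=
  NormedSpace.exp_series_hasSum_exp' (𝕂 := ℝ) A

theorem mckean_trace_exp {n : Type*} [Fintype n] [DecidableEq n] (P D : Matrix n n ℝ)
    (h : P * D = -(D * P)) (s : ℝ) :
    (P * NormedSpace.exp (s • (D * D))).trace = P.trace := by
  have hs := mckean_hasSum (s • (D * D))
  have hf : Continuous (fun A : Matrix n n ℝ => (P * A).trace) := by fun_prop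
  have h2 := hs.map (Matrix.traceAddMonoidHom n ℝ |>.comp (AddMonoidHom.mulLeft P)) hf
  have h3 := hasSum_single (f := fun k : ℕ =>
    (P * (((k.factorial : ℝ)⁻¹) • (s • (D * D)) ^ k)).trace) 0 (by
      intro k hk
      obtain ⟨m, rfl⟩ := Nat.exists_eq_succ_of_ne_zero hk
      simp only [smul_pow, Matrix.mul_smul, Matrix.trace_smul, Nat.succ_eq_add_one,
        mckean_trace_pow P D h m, smul_zero])
  have h4 := h2.unique h3
  simpa using h4

theorem mckean_anti (A : Finset (Finset ℕ)) (hA : ∅ ∉ A) :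
    Matrix.diagonal (fun x : A => (-1 : ℝ) ^ ((x : Finset ℕ).card - 1)) * dirac A =
      -(dirac A * Matrix.diagonal (fun x : A => (-1 : ℝ) ^ ((x : Finset ℕ).card - 1))) := by
  have key : ∀ x : A, 0 < (x : Finset ℕ).card := by
    intro x
    rw [Finset.card_pos, Finset.nonempty_iff_ne_empty]
    intro h
    exact hA (h ▸ x.2)
  ext x y
  rw [Matrix.neg_apply, Matrix.diagonal_mul, Matrix.mul_diagonal]
  simp only [dirac, Matrix.add_apply, Matrix.transpose_apply, extDer, Matrix.of_apply]
  obtain ⟨a, ha⟩ := Nat.exists_eq_succ_of_ne_zero (key x).ne'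
  obtain ⟨b, hb⟩ := Nat.exists_eq_succ_of_ne_zero (key y).ne'
  rw [ha, hb]
  simp only [Nat.succ_eq_add_one, Nat.add_sub_cancel]
  by_cases h1 : a = b + 1
  · subst h1
    rw [pow_succ]
    ring
  · by_cases h2 : b = a + 1
    · subst h2
      rw [pow_succ]
      ring
    · rw [if_neg (by omega), if_neg (by omega)]
      ring

/-- **McKean–Singer symmetry.** For U = G \ K with K a subcomplex of the complex G
(the case K = ∅, U = G is allowed), the supertrace of the heat kernel exp(-t L_U) is
independent of t and equals the Euler characteristic Σ_p (-1)^p f_p(U). -/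
theorem mckean_singer (G K : Finset (Finset ℕ)) (hG : IsComplex G)
    (hKG : K ⊆ G) (hK : IsSubcomplex K) (t : ℝ) :
    ∑ x : (G \ K : Finset (Finset ℕ)),
        (-1 : ℝ) ^ ((x : Finset ℕ).card - 1) *
          (NormedSpace.exp ((-t) • hodge (G \ K))) x x =
      ∑ p ∈ Finset.range (G.sup Finset.card), (-1 : ℝ) ^ p * (fvec (G \ K) p : ℝ) := by
  have hU : ∅ ∉ G \ K := fun h => hG.2.1 (Finset.mem_sdiff.mp h).1
  have h := mckean_trace_exp _ _ (mckean_anti (G \ K) hU) (-t)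
  have h1 : ∑ x : (G \ K : Finset (Finset ℕ)),
        (-1 : ℝ) ^ ((x : Finset ℕ).card - 1) *
          (NormedSpace.exp ((-t) • hodge (G \ K))) x x =
      ∑ x : (G \ K : Finset (Finset ℕ)), (-1 : ℝ) ^ ((x : Finset ℕ).card - 1) := by
    simpa only [Matrix.trace, Matrix.diag_apply, Matrix.diagonal_mul,
      Matrix.diagonal_apply_eq, hodge] using h
  rw [h1, Finset.sum_coe_sort (G \ K) (fun x => (-1 : ℝ) ^ (x.card - 1))]
  have hpos : ∀ x ∈ G \ K, 0 < x.card := by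
    intro x hx
    rw [Finset.card_pos, Finset.nonempty_iff_ne_empty]
    rintro rfl
    exact hU hx
  have hmaps : ∀ x ∈ G \ K, x.card - 1 ∈ Finset.range (G.sup Finset.card) := by
    intro x hx
    have := Finset.le_sup (f := Finset.card) (Finset.mem_sdiff.mp hx).1
    have := hpos x hx
    rw [Finset.mem_range]
    omega
  rw [← Finset.sum_fiberwise_of_maps_to hmaps]
  refine Finset.sum_congr rfl fun p _ => ?_
  have hfil : (G \ K).filter (fun x => x.card - 1 = p) =
      (G \ K).filter (fun x => x.card = p + 1) := by
    refine Finset.filter_congr fun x hx => ?_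
    have := hpos x hx
    omega
  rw [hfil, fvec, Finset.sum_congr rfl (g := fun _ => (-1 : ℝ) ^ p), Finset.sum_const,
    nsmul_eq_mul, mul_comm]
  intro x hx
  rw [(Finset.mem_filter.mp hx).2, Nat.add_sub_cancel]
end
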